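/- arXiv:2212.02668 — 6 statements merged into one kernel-verified Lean document; each statement's English description precedes it below -/
import Mathlib

section
/- Let G be a finite 3-regular (cubic) simple graph that has at least two hamiltonian cycles with distinct edge sets, and suppose that some edge of G lies on every hamiltonian cycle of G. Then there exist a vertex u of G and an edge e incident with u such that e lies on every hamiltonian cycle of G and, for each of the two other edges f incident with u, G has a hamiltonian cycle whose edge set contains both e and f. -/
/-!
Call an edge forced if it lies on every hamiltonian cycle. If the conclusion fails, then at every
vertex `u` incident with a forced edge some edge `f` at `u` lies on no hamiltonian cycle. As `u` has
degree three and a hamiltonian cycle uses two edges at `u`, every hamiltonian cycle uses exactly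
the two edges at `u` other than `f` (`edge_mem_of_avoided`), so both are forced. Hence along any
hamiltonian cycle, being incident with a forced edge propagates from each vertex to the next
(`mem_iff_of_walk`), and all its edges are forced. Any two hamiltonian cycles would then have the
same edges.
-/

/-- A hamiltonian cycle `q` avoiding the edge `s(u, b)` at a vertex `u` of degree three uses both
other edges at `u`, hence every edge at `u` of any closed walk `p` avoiding `s(u, b)`. -/
lemma edge_mem_of_avoided {V : Type*} [Fintype V] [DecidableEq V]
    (G : SimpleGraph V) [DecidableRel G.Adj] {u b : V} (hdeg : G.degree u = 3) (hb : G.Adj u b)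
    {x y : V} {p : G.Walk x x} {q : G.Walk y y}
    (hq : q.IsHamiltonianCycle)
    (hpb : s(u, b) ∉ p.edges) (hqb : s(u, b) ∉ q.edges) {c : V} (hc : s(u, c) ∈ p.edges) :
    s(u, c) ∈ q.edges := by
  have key : q.toSubgraph.neighborSet u = ((G.neighborFinset u).erase b : Finset V) := by
    apply Set.eq_of_subset_of_ncard_le
    · intro d hd
      have hd' : q.toSubgraph.Adj u d := hd
      have hdq : s(u, d) ∈ q.edges := by
        rwa [← SimpleGraph.Walk.adj_toSubgraph_iff_mem_edges]
      have hdb : d ≠ b := by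
        rintro rfl
        exact hqb hdq
      simpa [hdb] using hd'.adj_sub
    · rw [hq.isCycle.ncard_neighborSet_toSubgraph_eq_two (hq.mem_support u),
        Set.ncard_coe_finset, Finset.card_erase_of_mem (by simpa using hb),
        SimpleGraph.card_neighborFinset_eq_degree, hdeg]
    · exact Finset.finite_toSet _
  have hcb : c ≠ b := by
    rintro rfl
    exact hpb hc
  have hcm : c ∈ q.toSubgraph.neighborSet u := by
    rw [key]
    simpa [hcb] using p.adj_of_mem_edges hc
  rwa [← SimpleGraph.Walk.adj_toSubgraph_iff_mem_edges]

/-- A property that passes along the edges of a walk, in either direction, holds at all of its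
vertices or at none. -/
lemma mem_iff_of_walk {V : Type*} {G : SimpleGraph V} (S : V → Prop) {a b : V} (p : G.Walk a b)
    (h : ∀ v w, s(v, w) ∈ p.edges → S v → S w) : ∀ x ∈ p.support, (S a ↔ S x) := by
  induction p with
  | nil => simp
  | @cons a c b hac p ih =>
    intro x hx
    rw [SimpleGraph.Walk.support_cons, List.mem_cons] at hx
    rcases hx with rfl | hx
    · rfl
    · rw [← ih (fun v w hvw => h v w (by simp [hvw])) x hx]
      exact ⟨h a c (by simp), h c a (by simp [Sym2.eq_swap])⟩


/-- Combinatorial core of Proposition 8: in a cubic graph with at least two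
hamiltonian cycles (with distinct edge sets) in which some edge lies on every
hamiltonian cycle, there is a vertex `u` and an edge `e` incident with `u` lying
on every hamiltonian cycle, such that for each of the two other edges `f` at `u`
there is a hamiltonian cycle through both `e` and `f`. -/
theorem forced_edge_with_flexible_companions
    {V : Type*} [Fintype V] [DecidableEq V]
    (G : SimpleGraph V) [DecidableRel G.Adj]
    (hcubic : ∀ v : V, G.degree v = 3)
    (htwo : ∃ (a b : V) (p : G.Walk a a) (q : G.Walk b b),
      p.IsHamiltonianCycle ∧ q.IsHamiltonianCycle ∧
      p.edges.toFinset ≠ q.edges.toFinset)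
    (hforced : ∃ e ∈ G.edgeSet,
      ∀ (a : V) (p : G.Walk a a), p.IsHamiltonianCycle → e ∈ p.edges) :
    ∃ (u : V) (e : Sym2 V), e ∈ G.incidenceSet u ∧
      (∀ (a : V) (p : G.Walk a a), p.IsHamiltonianCycle → e ∈ p.edges) ∧
      ∀ f ∈ G.incidenceSet u, f ≠ e →
        ∃ (a : V) (p : G.Walk a a),
          p.IsHamiltonianCycle ∧ e ∈ p.edges ∧ f ∈ p.edges := by
  by_contra hcon
  push Not at hcon
  obtain ⟨e₀, he₀, hf₀⟩ := hforced
  obtain ⟨a, b, p, q, hp, hq, hne⟩ := htwo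
  let F : Sym2 V → Prop := fun e => ∀ (a : V) (p : G.Walk a a), p.IsHamiltonianCycle → e ∈ p.edges
  have local_forced : ∀ u v, F s(u, v) → ∀ (x : V) (r : G.Walk x x), r.IsHamiltonianCycle →
      ∀ w, s(u, w) ∈ r.edges → F s(u, w) := by
    intro u v huv x r hr w hw y t ht
    have hadj : G.Adj u v := r.adj_of_mem_edges (huv x r hr)
    obtain ⟨f, hf, -, hfno⟩ := hcon u s(u, v) ⟨hadj, by simp⟩ huv
    obtain ⟨hfG, hfu⟩ := hf
    obtain ⟨d, rfl⟩ := Sym2.mem_iff_exists.mp hfu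
    exact edge_mem_of_avoided G (hcubic u) hfG ht (hfno x r hr (huv x r hr))
      (hfno y t ht (huv y t ht)) hw
  have all_forced : ∀ (x : V) (r : G.Walk x x), r.IsHamiltonianCycle → ∀ e ∈ r.edges, F e := by
    intro x r hr e he
    have hiff := mem_iff_of_walk (fun u => ∃ v, F s(u, v)) r (by
      rintro v w hvw ⟨z, hz⟩
      exact ⟨v, by rw [Sym2.eq_swap]; exact local_forced v z hz x r hr w hvw⟩)
    induction e₀ with | _ u₀ v₀ =>
    induction e with | _ u v =>
    obtain ⟨z, hz⟩ := (hiff u (hr.mem_support u)).mp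
      ((hiff u₀ (hr.mem_support u₀)).mpr ⟨v₀, hf₀⟩)
    exact local_forced u z hz x r hr v he
  apply hne
  ext e
  simp only [List.mem_toFinset]
  exact ⟨fun h => all_forced a p hp e h b q hq, fun h => all_forced b q hq e h a p hp⟩
end

section
/- Every finite 3-regular (cubic) simple graph that has a hamiltonian cycle has at least two hamiltonian cycles with distinct edge sets; that is, no cubic graph is uniquely hamiltonian. -/
/-!
The proof is Thomason's lollipop argument. Write `N` for the number of vertices and fix a directed
edge from `b` to `a`. Consider all hamiltonian paths `f 0, f 1, …, f (N - 1)` ending in `b, a`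
(`IsHamPath`). Whenever the starting vertex `f 0` is adjacent to `f k` with `2 ≤ k ≤ N - 2`, reversing
the first `k` vertices gives another such path, and reversing them again returns the original
one. This is a fixed-point-free involution on the pairs `(f, k)`, so the number of these pairs is
even. As the graph is cubic, a given path `f` occurs in exactly `2` pairs, or in exactly `1` when
`f 0` is adjacent to `a`, that is, when `f` closes up to a hamiltonian cycle. Hence the number of
closing paths is even (`even_card_closing`), so the path obtained from the given hamiltonian
cycle is accompanied by a second one. Finally, a hamiltonian cycle through the edge `ba`, traversed
in this direction, is determined by its edge set (`eq_of_edges_eq`), so the two paths close up to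
cycles with distinct edge sets.
-/

namespace Smith

open Finset SimpleGraph

variable {V : Type*} {m : ℕ}

/-- Reversal of the first `k` elements of `Fin n`: the indices `i < k` are sent to `k - 1 - i`,
the others are fixed. -/
def prefixRev {n : ℕ} (k : Fin n) : Equiv.Perm (Fin n) :=
  Function.Involutive.toPerm
    (fun i => if i.val < k.val then ⟨k.val - 1 - i.val, by omega⟩ else i)
    (by intro i; ext; dsimp only; split_ifs <;> simp_all <;> omega)

lemma prefixRev_val {n : ℕ} (k i : Fin n) :
    (prefixRev k i).val = if i.val < k.val then k.val - 1 - i.val else i.val := by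
  change (if i.val < k.val then (⟨k.val - 1 - i.val, _⟩ : Fin n) else i).val = _
  split_ifs <;> rfl

lemma prefixRev_prefixRev {n : ℕ} (k i : Fin n) : prefixRev k (prefixRev k i) = i := by
  ext; simp only [prefixRev_val]; split_ifs <;> omega

/-- The enumeration `f` of the vertices is a hamiltonian path of `G` whose last two vertices
are `b` and `a`. The number of vertices is written `m + 4`. -/
def IsHamPath (G : SimpleGraph V) (a b : V) (f : Fin (m + 4) ≃ V) : Prop :=
  (∀ i j : Fin (m + 4), i.val + 1 = j.val → G.Adj (f i) (f j)) ∧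
    f ⟨m + 3, by omega⟩ = a ∧ f ⟨m + 2, by omega⟩ = b

/-- The positions `k` at which the path `f` can be rerouted: `f 0` is adjacent to `f k`, and
reversing the first `k` vertices changes `f` but not its last two vertices. -/
def IsRotation (G : SimpleGraph V) (f : Fin (m + 4) ≃ V) (k : Fin (m + 4)) : Prop :=
  2 ≤ k.val ∧ k.val ≤ m + 2 ∧ G.Adj (f 0) (f k)

lemma IsHamPath.rotate {G : SimpleGraph V} {a b : V} {f : Fin (m + 4) ≃ V} {k : Fin (m + 4)}
    (hf : IsHamPath G a b f) (hk : IsRotation G f k) :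
    IsHamPath G a b ((prefixRev k).trans f) := by
  obtain ⟨h1, h2, h3⟩ := hf
  obtain ⟨k1, k2, k3⟩ := hk
  have hfix : ∀ i : Fin (m + 4), k.val ≤ i.val → prefixRev k i = i := fun i hi => by
    ext; rw [prefixRev_val, if_neg (by omega)]
  refine ⟨fun i j hij => ?_, ?_, ?_⟩
  · simp only [Equiv.trans_apply]
    rcases lt_trichotomy j.val k.val with h | h | h
    · apply SimpleGraph.Adj.symm
      apply h1
      rw [prefixRev_val, prefixRev_val, if_pos h, if_pos (by omega)]
      omega
    · have e1 : prefixRev k i = 0 := by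
        ext; rw [prefixRev_val, if_pos (by omega)]; simp; omega
      have e2 : j = k := Fin.ext h
      rw [e1, hfix j h.ge, e2]
      exact k3
    · rw [hfix i (by omega), hfix j (by omega)]
      exact h1 i j hij
  · simp only [Equiv.trans_apply]
    rw [hfix _ (by simp; omega), h2]
  · simp only [Equiv.trans_apply]
    rw [hfix _ (by simp; omega), h3]

lemma IsRotation.rotate {G : SimpleGraph V} {a b : V} {f : Fin (m + 4) ≃ V} {k : Fin (m + 4)}
    (hf : IsHamPath G a b f) (hk : IsRotation G f k) :
    IsRotation G ((prefixRev k).trans f) k := by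
  obtain ⟨k1, k2, k3⟩ := hk
  refine ⟨k1, k2, ?_⟩
  simp only [Equiv.trans_apply]
  apply hf.1
  have h0 : (0 : Fin (m + 4)).val = 0 := rfl
  rw [prefixRev_val, prefixRev_val, h0, if_pos (by omega), if_neg (by omega)]
  omega

lemma prefixRev_trans_ne {f : Fin (m + 4) ≃ V} {k : Fin (m + 4)} (hk : 2 ≤ k.val) :
    (prefixRev k).trans f ≠ f := by
  intro h
  have h0 := congrArg (fun g : Fin (m + 4) ≃ V => g 0) h
  simp only [Equiv.trans_apply, EmbeddingLike.apply_eq_iff_eq] at h0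
  have := congrArg Fin.val h0
  have hz : (0 : Fin (m + 4)).val = 0 := rfl
  rw [prefixRev_val, hz, if_pos (by omega)] at this
  omega

section Parity

variable [Fintype V] [DecidableEq V] (G : SimpleGraph V) [DecidableRel G.Adj]

open Classical in
/-- The three neighbours of the starting vertex `f 0` are `f 1`, the `f k` with `k` a rotation
position, and possibly the final vertex. -/
lemma card_rotations (hcubic : ∀ v : V, G.degree v = 3) {a b : V} {f : Fin (m + 4) ≃ V}
    (hf : IsHamPath G a b f) :
    (univ.filter (IsRotation G f)).card + (if G.Adj (f 0) a then 1 else 0) = 2 := by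
  have hdeg : (univ.filter fun i => G.Adj (f 0) (f i)).card = 3 := by
    refine Eq.trans ?_ (hcubic (f 0))
    rw [← card_neighborFinset_eq_degree]
    refine card_bij (fun i _ => f i) (by simp) (fun _ _ _ _ h => f.injective h) fun v hv => ?_
    exact ⟨f.symm v, by simpa using hv, by simp⟩
  have hsplit : (univ.filter fun i => G.Adj (f 0) (f i)) =
      insert ⟨1, by omega⟩ (univ.filter (IsRotation G f) ∪
        (if G.Adj (f 0) a then {⟨m + 3, by omega⟩} else ∅)) := by
    ext i
    simp only [mem_filter, mem_univ, true_and, mem_insert, mem_union, IsRotation]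
    constructor
    · intro h
      by_cases h0 : i.val = 0
      · exact absurd (by rw [show i = 0 from Fin.ext h0] at h; exact h) (G.irrefl)
      by_cases h1 : i.val = 1
      · exact Or.inl (Fin.ext h1)
      by_cases h3 : i.val = m + 3
      · right; right
        have e : i = ⟨m + 3, by omega⟩ := Fin.ext h3
        rw [e, hf.2.1] at h
        simp [h, e]
      · right; left
        exact ⟨by omega, by omega, h⟩
    · rintro (rfl | h | h)
      · exact hf.1 _ _ (by simp)
      · exact h.2.2
      · split_ifs at h with ha
        · rw [mem_singleton] at h
          rw [h, hf.2.1]; exact ha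
        · simp at h
  have hne : (⟨1, by omega⟩ : Fin (m + 4)) ∉ (univ.filter (IsRotation G f) ∪
        (if G.Adj (f 0) a then {⟨m + 3, by omega⟩} else ∅)) := by
    simp only [mem_union, mem_filter, IsRotation]
    split_ifs <;> simp
  have hdisj : Disjoint (univ.filter (IsRotation G f))
        (if G.Adj (f 0) a then {(⟨m + 3, by omega⟩ : Fin (m + 4))} else ∅) := by
    split_ifs <;> simp [IsRotation]
  rw [hsplit, card_insert_of_notMem hne, card_union_of_disjoint hdisj] at hdeg
  split_ifs at hdeg ⊢ <;> simp at hdeg ⊢ <;> omega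

open Classical in
lemma even_card_closing (hcubic : ∀ v : V, G.degree v = 3) (a b : V) :
    Even (univ.filter fun f : Fin (m + 4) ≃ V => IsHamPath G a b f ∧ G.Adj (f 0) a).card := by
  set P := univ.filter fun f : Fin (m + 4) ≃ V => IsHamPath G a b f with hP
  set S := P.sigma fun f => univ.filter (IsRotation G f) with hS
  have hSmem : ∀ x, x ∈ S ↔ IsHamPath G a b x.1 ∧ IsRotation G x.1 x.2 := by
    intro x; simp [hS, hP]
  have hinv : ∑ _x ∈ S, (1 : ZMod 2) = 0 := by
    refine sum_involution (fun x _ => ⟨(prefixRev x.2).trans x.1, x.2⟩)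
      (fun _ _ => by decide) ?_ ?_ ?_
    · intro x hx _ h
      have h' := congrArg Sigma.fst h
      exact prefixRev_trans_ne ((hSmem x).1 hx).2.1 h'
    · intro x hx
      have hx' := (hSmem x).1 hx
      exact (hSmem _).2 ⟨hx'.1.rotate hx'.2, hx'.2.rotate hx'.1⟩
    · rintro ⟨f, k⟩ _
      have : (prefixRev k).trans ((prefixRev k).trans f) = f := by
        ext i; simp [prefixRev_prefixRev]
      simp [this]
  have hcardS : S.card + (P.filter fun f => G.Adj (f 0) a).card = 2 * P.card := by
    rw [hS, card_sigma, card_filter, ← sum_add_distrib, mul_comm, ← smul_eq_mul, ← sum_const]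
    exact sum_congr rfl fun f hf => card_rotations G hcubic (by simpa [hP] using hf)
  have hevenS : Even S.card := by
    rw [← ZMod.natCast_eq_zero_iff_even]
    simpa using hinv
  rw [← filter_filter, ← hP]
  have : Even (S.card + (P.filter fun f => G.Adj (f 0) a).card) := hcardS ▸ even_two_mul _
  exact (Nat.even_add.1 this).1 hevenS

end Parity

/-- A hamiltonian path whose ends are adjacent, as a homomorphism from the standard cycle. -/
def cycleHom {G : SimpleGraph V} {a b : V} {f : Fin (m + 4) ≃ V}
    (hf : IsHamPath G a b f) (ha : G.Adj (f 0) a) : cycleGraph (m + 1 + 3) →g G where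
  toFun := f
  map_rel' := by
    have key : ∀ i j : Fin (m + 4), i - j = 1 → G.Adj (f i) (f j) := by
      intro i j h
      have hij : i = j + 1 := by rw [← h]; abel
      by_cases hj : j.val = m + 3
      · have e1 : j = ⟨m + 3, by omega⟩ := Fin.ext hj
        have e2 : i = 0 := by
          rw [hij, e1]; ext; simp [Fin.val_add]
        rw [e1, e2, hf.2.1]; exact ha
      · apply SimpleGraph.Adj.symm
        apply hf.1
        rw [hij, Fin.val_add]
        simp
        rw [Nat.mod_eq_of_lt]; omega
    intro i j h
    rcases (cycleGraph_adj (n := m + 2)).1 h with h | h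
    · exact key i j h
    · exact (key j i h).symm

lemma consecutive_mem_edges_cycle (i j : Fin (m + 1 + 3)) (h : i.val + 1 = j.val) :
    s(i, j) ∈ (cycleGraph.cycle (m + 1)).edges := by
  rw [Walk.mk_mem_edges_iff_exists]
  refine ⟨m + 4 - j.val, by rw [cycleGraph.length_cycle]; omega, ?_⟩
  rw [cycleGraph.getVert_cycle (by omega), cycleGraph.getVert_cycle (by omega), Sym2.eq_swap]
  rw [Sym2.eq_iff]
  refine Or.inl ⟨Fin.ext ?_, Fin.ext ?_⟩ <;> simp only <;> rw [Nat.mod_eq_of_lt] <;> omega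

/-- The closed walk following a hamiltonian path whose ends are adjacent. -/
def closedWalk {G : SimpleGraph V} {a b : V} {f : Fin (m + 4) ≃ V}
    (hf : IsHamPath G a b f) (ha : G.Adj (f 0) a) :
    G.Walk (cycleHom hf ha 0) (cycleHom hf ha 0) :=
  (cycleGraph.cycle (m + 1)).map (cycleHom hf ha)

lemma closedWalk_isHamiltonianCycle [Fintype V] [DecidableEq V] {G : SimpleGraph V} {a b : V}
    {f : Fin (m + 4) ≃ V} (hf : IsHamPath G a b f) (ha : G.Adj (f 0) a) :
    (closedWalk hf ha).IsHamiltonianCycle := by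
  refine Walk.IsHamiltonianCycle.map (f := cycleHom hf ha) f.bijective ?_
  rw [Walk.isHamiltonianCycle_iff_isCycle_and_length_eq]
  exact ⟨cycleGraph.isCycle_cycle, by simp⟩

/-- Closing paths are determined by the edge sets of their cycles: going backwards from `b, a`,
each vertex is the neighbour on the cycle of its successor that has not been visited yet. -/
lemma eq_of_edges_eq [DecidableEq V] {G : SimpleGraph V} {a b : V}
    {f g : Fin (m + 4) ≃ V} (hf : IsHamPath G a b f) (hfa : G.Adj (f 0) a)
    (hg : IsHamPath G a b g) (hga : G.Adj (g 0) a)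
    (h : (closedWalk hf hfa).edges.toFinset = (closedWalk hg hga).edges.toFinset) : f = g := by
  have hadj : ∀ i j : Fin (m + 4), i.val + 1 = j.val →
      (cycleGraph (m + 4)).Adj (g.symm (f i)) (g.symm (f j)) := by
    intro i j hij
    have h1 : s(f i, f j) ∈ (closedWalk hf hfa).edges := by
      rw [closedWalk, Walk.edges_map]
      exact List.mem_map.2 ⟨_, consecutive_mem_edges_cycle i j hij, rfl⟩
    rw [← List.mem_toFinset, h, List.mem_toFinset, closedWalk, Walk.edges_map] at h1
    obtain ⟨e, he, heq⟩ := List.mem_map.1 h1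
    induction e with | _ x y =>
    have hxy := Walk.adj_of_mem_edges _ he
    have heq' : s(g x, g y) = s(f i, f j) := heq
    rw [Sym2.eq_iff] at heq'
    rcases heq' with ⟨e1, e2⟩ | ⟨e1, e2⟩
    · rw [← e1, ← e2]; simpa using hxy
    · rw [← e1, ← e2]; simpa using hxy.symm
  have key : ∀ d : ℕ, ∀ i : Fin (m + 4), i.val + d = m + 3 → f i = g i := by
    intro d
    induction d using Nat.strong_induction_on with
    | _ d ih =>
      intro i hi
      by_cases h0 : d = 0
      · have : i = ⟨m + 3, by omega⟩ := Fin.ext (by simp; omega)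
        rw [this, hf.2.1, hg.2.1]
      by_cases h1 : d = 1
      · have : i = ⟨m + 2, by omega⟩ := Fin.ext (by simp; omega)
        rw [this, hf.2.2, hg.2.2]
      have e1 := ih (d - 1) (by omega) ⟨i.val + 1, by omega⟩ (by simp; omega)
      have e2 := ih (d - 2) (by omega) ⟨i.val + 2, by omega⟩ (by simp; omega)
      have hA := hadj i ⟨i.val + 1, by omega⟩ rfl
      rw [e1, Equiv.symm_apply_apply] at hA
      have hne : g.symm (f i) ≠ ⟨i.val + 2, by omega⟩ := by
        intro hc
        rw [Equiv.symm_apply_eq, ← e2, EmbeddingLike.apply_eq_iff_eq] at hc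
        have := congrArg Fin.val hc
        simp at this
      rw [← Equiv.symm_apply_eq]
      generalize g.symm (f i) = x at hA hne
      have hone : (⟨i.val + 1, by omega⟩ : Fin (m + 4)) = i + 1 := by
        ext; rw [Fin.val_add]; simp; rw [Nat.mod_eq_of_lt]; omega
      have htwo : (⟨i.val + 2, by omega⟩ : Fin (m + 4)) = i + 1 + 1 := by
        rw [← hone]; ext; rw [Fin.val_add]; simp; rw [Nat.mod_eq_of_lt]; omega
      rw [hone] at hA
      rw [htwo] at hne
      rcases (cycleGraph_adj (n := m + 2)).1 hA with hx | hx
      · exact absurd (by rw [sub_eq_iff_eq_add] at hx; exact hx.trans (add_comm _ _)) hne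
      · rw [sub_eq_iff_eq_add, add_comm i] at hx
        exact (add_left_cancel hx).symm
  ext i
  exact key (m + 3 - i.val) i (by omega)

/-- A hamiltonian cycle, read from its second vertex around to its base vertex `a`, is a
hamiltonian path with adjacent ends. -/
lemma exists_closing_of_isHamiltonianCycle [Fintype V] [DecidableEq V] {G : SimpleGraph V} {a : V}
    {p : G.Walk a a} (hp : p.IsHamiltonianCycle) (hcard : Fintype.card V = m + 4) :
    ∃ (b : V) (f : Fin (m + 4) ≃ V), IsHamPath G a b f ∧ G.Adj (f 0) a := by
  have hlen : p.length = m + 4 := hp.length_eq.trans hcard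
  have hsupp : m + 4 = p.tail.support.length := by
    rw [hp.isHamiltonian_tail.length_support, hcard]
  let f : Fin (m + 4) ≃ V := (finCongr hsupp).trans hp.isHamiltonian_tail.getVertEquiv
  have hfv : ∀ i, f i = p.getVert (i.val + 1) := by
    intro i
    simp [f, Walk.getVert_tail]
  refine ⟨f ⟨m + 2, by omega⟩, f, ⟨fun i j hij => ?_, ?_, rfl⟩, ?_⟩
  · rw [hfv, hfv, ← hij]
    exact p.adj_getVert_succ (by omega)
  · rw [hfv]
    have : p.getVert (m + 4) = a := by rw [← hlen]; exact p.getVert_length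
    exact this
  · rw [hfv]
    have := p.adj_getVert_succ (i := 0) (by omega)
    rw [Walk.getVert_zero] at this
    simpa using this.symm

end Smith

/-- Smith's theorem: no finite cubic simple graph is uniquely hamiltonian.
If a cubic graph has a hamiltonian cycle, then it has two hamiltonian cycles
with distinct edge sets. -/
theorem cubic_not_uniquely_hamiltonian
    {V : Type*} [Fintype V] [DecidableEq V]
    (G : SimpleGraph V) [DecidableRel G.Adj]
    (hcubic : ∀ v : V, G.degree v = 3)
    (hham : ∃ (a : V) (p : G.Walk a a), p.IsHamiltonianCycle) :
    ∃ (a b : V) (p : G.Walk a a) (q : G.Walk b b),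
      p.IsHamiltonianCycle ∧ q.IsHamiltonianCycle ∧
      p.edges.toFinset ≠ q.edges.toFinset := by
  classical
  obtain ⟨a, p, hp⟩ := hham
  have hlt : 3 < Fintype.card V := hcubic a ▸ G.degree_lt_card_verts a
  obtain ⟨m, hm⟩ : ∃ m, Fintype.card V = m + 4 := ⟨Fintype.card V - 4, by omega⟩
  obtain ⟨b, f, hf, hfa⟩ := Smith.exists_closing_of_isHamiltonianCycle hp hm
  have heven := Smith.even_card_closing (m := m) G hcubic a b
  have hmem : f ∈ Finset.univ.filter fun f : Fin (m + 4) ≃ V =>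
      Smith.IsHamPath G a b f ∧ G.Adj (f 0) a := by simp [hf, hfa]
  have hone : 1 < (Finset.univ.filter fun f : Fin (m + 4) ≃ V =>
      Smith.IsHamPath G a b f ∧ G.Adj (f 0) a).card := by
    have hpos := Finset.card_pos.2 ⟨f, hmem⟩
    obtain ⟨r, hr⟩ := heven
    omega
  obtain ⟨g, hgmem, hgf⟩ := Finset.exists_mem_ne hone f
  simp only [Finset.mem_filter, Finset.mem_univ, true_and] at hgmem
  obtain ⟨hg, hga⟩ := hgmem
  exact ⟨_, _, Smith.closedWalk hf hfa, Smith.closedWalk hg hga,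
    Smith.closedWalk_isHamiltonianCycle hf hfa, Smith.closedWalk_isHamiltonianCycle hg hga,
    fun h => hgf (Smith.eq_of_edges_eq hf hfa hg hga h).symm⟩
end

section
/- Let G be a finite 3-regular bipartite simple graph with vertex bipartition (A, B), and let S be a set of vertices of G such that exactly two edges e1 and e2 of G have one endpoint in S and the other endpoint outside S. Let x1 be the endpoint of e1 in S and x2 the endpoint of e2 in S. Then x1 ≠ x2, and exactly one of x1, x2 lies in A (equivalently, x1 and x2 lie in different parts of the bipartition). -/
/-!
Give each vertex the sign `c v = 1` if `v ∈ A` and `c v = -1` otherwise, and sum `c v` over all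
ordered pairs `(v, w)` of adjacent vertices with `v ∈ S`. Since `G` is cubic, the total is
`3 * ∑ v ∈ S, c v`. The pairs with `w ∈ S` cancel, because the two orientations of an edge have
opposite signs, and the pairs with `w ∉ S` are the two cut edges. Hence `3 ∣ c x1 + c x2`; as this
sum is one of `-2, 0, 2`, it is `0`, so `x1` and `x2` lie in different parts and are distinct.
-/

/-- In a cubic bipartite graph with parts `A` and `B`, the two endpoints inside
`S` of the two edges of a 2-edge-cut separating `S` from its complement are
distinct and lie in different parts of the bipartition. -/
theorem two_edge_cut_endpoints_different_parts
    {V : Type*} [Fintype V] [DecidableEq V]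
    (G : SimpleGraph V) [DecidableRel G.Adj]
    (A B : Set V)
    (hpart : ∀ v : V, v ∈ A ↔ v ∉ B)
    (hbip : ∀ a b : V, G.Adj a b → (a ∈ A ↔ b ∈ B))
    (hcubic : ∀ v : V, G.degree v = 3)
    (S : Set V) (x1 y1 x2 y2 : V)
    (hx1 : x1 ∈ S) (hy1 : y1 ∉ S) (hx2 : x2 ∈ S) (hy2 : y2 ∉ S)
    (ha1 : G.Adj x1 y1) (ha2 : G.Adj x2 y2)
    (hne : s(x1, y1) ≠ s(x2, y2))
    (hcross : ∀ a b : V, G.Adj a b → a ∈ S → b ∉ S →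
      (a = x1 ∧ b = y1) ∨ (a = x2 ∧ b = y2)) :
    x1 ≠ x2 ∧ ((x1 ∈ A ∧ x2 ∉ A) ∨ (x2 ∈ A ∧ x1 ∉ A)) := by
  classical
  let c : V → ℤ := fun v => if v ∈ A then 1 else -1
  have hc : ∀ v w, G.Adj v w → c w = - c v := by
    intro v w h
    have h1 := hbip v w h
    have h2 := hpart w
    by_cases hv : v ∈ A <;> by_cases hw : w ∈ A <;> simp_all [c]
  have htotal : ∑ v, ∑ w, (if G.Adj v w ∧ v ∈ S then c v else 0)
      = 3 * ∑ v, if v ∈ S then c v else 0 := by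
    rw [Finset.mul_sum]
    refine Finset.sum_congr rfl fun v _ => ?_
    by_cases hv : v ∈ S
    · have h3 := hcubic v
      rw [← G.card_neighborFinset_eq_degree, G.neighborFinset_eq_filter] at h3
      simp [hv, ← Finset.sum_filter, h3]
    · simp [hv]
  have hinner : ∑ v, ∑ w, (if G.Adj v w ∧ v ∈ S ∧ w ∈ S then c v else 0) = 0 := by
    -- Exchanging `v` and `w` negates every summand, so the sum equals its own negative.
    have hneg : ∑ v, ∑ w, (if G.Adj v w ∧ v ∈ S ∧ w ∈ S then c v else 0)
        = - ∑ v, ∑ w, (if G.Adj v w ∧ v ∈ S ∧ w ∈ S then c v else 0) := by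
      conv_lhs => rw [Finset.sum_comm]
      simp only [← Finset.sum_neg_distrib]
      refine Finset.sum_congr rfl fun v _ => Finset.sum_congr rfl fun w _ => ?_
      by_cases h : G.Adj v w ∧ v ∈ S ∧ w ∈ S
      · rw [if_pos h, if_pos ⟨h.1.symm, h.2.2, h.2.1⟩, hc v w h.1]
      · rw [if_neg h, if_neg fun h' => h ⟨h'.1.symm, h'.2.2, h'.2.1⟩, neg_zero]
    omega
  have hsplit : ∀ v w, (if G.Adj v w ∧ v ∈ S then c v else 0)
      = (if G.Adj v w ∧ v ∈ S ∧ w ∈ S then c v else 0)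
        + ((if v = x1 then if w = y1 then c x1 else 0 else 0)
          + (if v = x2 then if w = y2 then c x2 else 0 else 0)) := by
    intro v w
    have h := hcross v w
    have hd : ¬ (x1 = x2 ∧ y1 = y2) := by
      rintro ⟨rfl, rfl⟩
      exact hne rfl
    clear_value c
    clear hcross hc htotal hinner hpart hbip hcubic hne
    grind
  have hcut : ∑ v, ∑ w, (if G.Adj v w ∧ v ∈ S then c v else 0) = c x1 + c x2 := by
    simp only [hsplit, Finset.sum_add_distrib, hinner, zero_add]
    simp [Finset.sum_ite_irrel]
  have hdiv : 3 * (∑ v, if v ∈ S then c v else 0) = c x1 + c x2 := htotal.symm.trans hcut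
  have hopp : (x1 ∈ A ∧ x2 ∉ A) ∨ (x2 ∈ A ∧ x1 ∉ A) := by
    generalize (∑ v, if v ∈ S then c v else 0) = k at hdiv
    by_cases h1 : x1 ∈ A <;> by_cases h2 : x2 ∈ A <;> simp [c, h1, h2] at hdiv ⊢ <;> omega
  refine ⟨?_, hopp⟩
  rintro rfl
  tauto
end

section
/- Let G be a finite simple graph on vertex set V and let S ⊆ V with |S| ≥ 3 and |V \ S| ≥ 3. Suppose exactly two edges e1 = x1y1 and e2 = x2y2 of G have one endpoint in S and the other outside S, where x1, x2 ∈ S are distinct and y1, y2 ∉ S are distinct. Let G_S be the graph obtained from the induced subgraph of G on S by adding the edge x1x2, and let G_T be the graph obtained from the induced subgraph of G on V \ S by adding the edge y1y2. Then G has a hamiltonian cycle if and only if G_S has a hamiltonian cycle containing the edge x1x2 and G_T has a hamiltonian cycle containing the edge y1y2. -/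
/-!
The statement is reduced to spanning paths. In a finite graph on at least three vertices, deleting
an edge `a b` from a hamiltonian cycle through it leaves a hamiltonian path from `a` to `b` that
avoids the edge `a b` (`exists_hamiltonian_path_of_mem_edges`), and conversely a hamiltonian path
between adjacent vertices closes up to a hamiltonian cycle (`exists_cycle_of_hamiltonian_path`).
Hence `G.inducePlusEdge S a b` has a hamiltonian cycle through `a b` exactly when `G` contains a
path from `a` to `b` with vertex set `S` (`inducePlusEdge_iff`).

If `G` has a hamiltonian cycle, the cycle meets both sides of the cut, so it uses a cut edge, by
symmetry `x1 y1`. Deleting it gives a path from `x1` to `y1` that can only cross the cut through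
`x2 y2`, and does so exactly once since `x2` is visited once; hence the path splits at `x2 y2` into
a path from `x1` to `x2` spanning `S` and a path from `y2` to `y1` spanning the complement
(`exists_split`). Conversely two such paths are joined by the two cut edges.
-/

/-- The induced subgraph of `G` on `S` together with one extra edge `a b`. -/
def SimpleGraph.inducePlusEdge {V : Type*} (G : SimpleGraph V) (S : Set V)
    (a b : ↥S) : SimpleGraph ↥S :=
  G.induce S ⊔ SimpleGraph.fromEdgeSet {s(a, b)}

namespace TwoEdgeCut

open SimpleGraph

/-- `G` contains a path from `a` to `b` whose vertex set is exactly `S`. -/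
def HasSpanningPath {V : Type*} (G : SimpleGraph V) (S : Set V) (a b : V) : Prop :=
  ∃ p : G.Walk a b, p.IsPath ∧ ∀ v, v ∈ p.support ↔ v ∈ S

lemma exists_append_of_mem_darts {V : Type*} {G : SimpleGraph V} {u v : V} (p : G.Walk u v)
    (d : G.Dart) (hd : d ∈ p.darts) :
    ∃ (q : G.Walk u d.fst) (r : G.Walk d.snd v), p = q.append (Walk.cons d.adj r) := by
  induction p with
  | nil => simp at hd
  | cons h p ih =>
    rw [Walk.darts_cons, List.mem_cons] at hd
    rcases hd with rfl | hd
    · exact ⟨Walk.nil, p, rfl⟩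
    · obtain ⟨q, r, rfl⟩ := ih hd
      exact ⟨Walk.cons h q, r, rfl⟩

/-- The version of `exists_hamiltonian_path_of_mem_edges` for an edge with a given direction of
traversal: rotating the cycle to start with this edge leaves the path as its tail. -/
lemma exists_hamiltonian_path_of_mem_darts {V : Type*} [DecidableEq V] {G : SimpleGraph V} {c : V}
    (p : G.Walk c c) (hp : p.IsHamiltonianCycle) (d : G.Dart) (hd : d ∈ p.darts) :
    ∃ q : G.Walk d.snd d.fst, q.IsHamiltonian ∧ s(d.fst, d.snd) ∉ q.edges := by
  obtain ⟨q, r, rfl⟩ := exists_append_of_mem_darts p d hd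
  have hcount :=
    (Walk.isHamiltonianCycle_iff_isCycle_and_support_count_tail_eq_one.1 hp).2
  have hedges := hp.isCycle.edges_nodup
  refine ⟨r.append q, fun v => ?_, ?_⟩
  · rw [← hcount v, Walk.support_append, Walk.support_append, Walk.support_cons, List.tail_cons,
      List.tail_append_of_ne_nil (Walk.support_ne_nil q)]
    simp only [List.count_append]
    omega
  · rw [Walk.edges_append, Walk.edges_cons] at hedges
    rw [Walk.edges_append]
    grind [List.nodup_append, List.nodup_cons]

lemma exists_hamiltonian_path_of_mem_edges {V : Type*} [DecidableEq V] {G : SimpleGraph V} {c : V}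
    (p : G.Walk c c) (hp : p.IsHamiltonianCycle) {a b : V} (hab : s(a, b) ∈ p.edges) :
    ∃ q : G.Walk a b, q.IsHamiltonian ∧ s(a, b) ∉ q.edges := by
  obtain ⟨d, hd, hde⟩ := List.mem_map.1 hab
  obtain ⟨q, hq, hqe⟩ := exists_hamiltonian_path_of_mem_darts p hp d hd
  rcases (dart_edge_eq_mk'_iff'.1 hde) with ⟨h1, h2⟩ | ⟨h1, h2⟩
  · subst h1 h2
    exact ⟨q.reverse, fun v => by rw [Walk.support_reverse, List.count_reverse, hq v],
      by simpa using hqe⟩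
  · subst h1 h2
    exact ⟨q, hq, by rwa [Sym2.eq_swap]⟩

/-- A path that contains the edge between its end points consists of that edge only. -/
lemma length_eq_one_of_mem_edges {V : Type*} {G : SimpleGraph V} {a b : V}
    (p : G.Walk a b) (hp : p.IsPath) (h : s(a, b) ∈ p.edges) : p.length = 1 := by
  cases p with
  | nil => simp at h
  | cons hadj p =>
    rw [Walk.cons_isPath_iff] at hp
    rw [Walk.edges_cons, List.mem_cons] at h
    rcases h with h | h
    · rw [Sym2.congr_right] at h
      subst h
      simp [Walk.length_eq_zero_iff.2 (Walk.isPath_iff_nil.1 hp.1)]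
    · exact absurd (p.fst_mem_support_of_mem_edges h) hp.2

lemma exists_cycle_of_hamiltonian_path {V : Type*} [Fintype V] [DecidableEq V]
    {G : SimpleGraph V} {a b : V} (p : G.Walk a b) (hp : p.IsHamiltonian) (hab : G.Adj a b)
    (hcard : 3 ≤ Fintype.card V) :
    ∃ (c : V) (q : G.Walk c c), q.IsHamiltonianCycle ∧ s(a, b) ∈ q.edges := by
  have hlen := hp.length_eq
  refine ⟨b, Walk.cons hab.symm p, ?_, by simp [Sym2.eq_swap]⟩
  rw [Walk.isHamiltonianCycle_iff_isCycle_and_support_count_tail_eq_one, Walk.cons_isCycle_iff]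
  refine ⟨⟨hp.isPath, fun h => ?_⟩, fun v => by simpa using hp v⟩
  have := length_eq_one_of_mem_edges p hp.isPath (by rwa [Sym2.eq_swap])
  omega

lemma inducePlusEdge_iff {V : Type*} [Fintype V] [DecidableEq V] (G : SimpleGraph V)
    (S : Set V) (hS : 3 ≤ S.ncard) (a b : V) (ha : a ∈ S) (hb : b ∈ S) (hab : a ≠ b) :
    (∃ (c : ↥S) (p : (G.inducePlusEdge S ⟨a, ha⟩ ⟨b, hb⟩).Walk c c),
      p.IsHamiltonianCycle ∧ s((⟨a, ha⟩ : ↥S), (⟨b, hb⟩ : ↥S)) ∈ p.edges) ↔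
    HasSpanningPath G S a b := by
  constructor
  · rintro ⟨c, p, hp, hpe⟩
    obtain ⟨q, hq, hqe⟩ := exists_hamiltonian_path_of_mem_edges p hp hpe
    -- Off the added edge, every edge of `q` is an edge of the induced subgraph.
    have hsub : ∀ e ∈ q.edges, e ∈ (G.induce S).edgeSet := by
      intro e he
      have h1 := q.edges_subset_edgeSet he
      rw [inducePlusEdge, edgeSet_sup] at h1
      rcases h1 with h1 | h1
      · exact h1
      · rw [edgeSet_fromEdgeSet] at h1
        have h2 : e = _ := h1.1
        exact absurd (h2 ▸ he) hqe
    let f : G.induce S →g G := (Embedding.induce S).toHom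
    have hf : Function.Injective f := Subtype.val_injective
    have hsupp : ∀ v, v ∈ ((q.transfer _ hsub).map f).support ↔ ∃ w ∈ q.support, f w = v := by
      intro v
      rw [Walk.support_map, Walk.support_transfer, List.mem_map]
    refine ⟨(q.transfer _ hsub).map f, (hq.isPath.transfer hsub).map hf, fun v => ?_⟩
    refine (hsupp v).trans ⟨?_, fun hv => ?_⟩
    · rintro ⟨w, -, rfl⟩
      exact w.2
    · exact ⟨⟨v, hv⟩, hq.mem_support _, rfl⟩
  · rintro ⟨p, hp, hps⟩
    classical
    have hle : G.induce S ≤ G.inducePlusEdge S ⟨a, ha⟩ ⟨b, hb⟩ := le_sup_left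
    have hpS : ∀ v ∈ p.support, v ∈ S := fun v hv => (hps v).1 hv
    refine exists_cycle_of_hamiltonian_path ((p.induce S hpS).mapLe hle) ?_ ?_ ?_
    · apply Walk.IsPath.isHamiltonian_of_mem
      · rw [Walk.isPath_mapLe]
        apply Walk.IsPath.of_map (f := (Embedding.induce S).toHom)
        rwa [Walk.map_induce]
      · rintro ⟨w, hw⟩
        simpa [Walk.support_induce] using (hps w).2 hw
    · exact Or.inr (by simpa using hab)
    · rwa [← Nat.card_eq_fintype_card, Nat.card_coe_set_eq]

section Split

variable {V : Type*} {G : SimpleGraph V} {S : Set V} {x1 x2 y1 y2 : V}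

/-- A walk starting outside `S` that avoids the cut edge `x1 y1` could enter `S` only at `x2`. -/
lemma support_subset_compl
    (hcross : ∀ a b : V, G.Adj a b → a ∈ S → b ∉ S →
      (a = x1 ∧ b = y1) ∨ (a = x2 ∧ b = y2))
    {u v : V} (p : G.Walk u v) (hu : u ∉ S) (he : s(x1, y1) ∉ p.edges) (hx : x2 ∉ p.support) :
    ∀ w ∈ p.support, w ∉ S := by
  induction p with
  | nil => simpa using hu
  | @cons u w v h p ih =>
    simp only [Walk.edges_cons, Walk.support_cons, List.mem_cons, not_or] at he hx
    have hw : w ∉ S := by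
      intro hw
      rcases hcross w u h.symm hw hu with ⟨rfl, rfl⟩ | ⟨rfl, rfl⟩
      · exact he.1 Sym2.eq_swap
      · exact hx.2 p.start_mem_support
    intro z hz
    rw [Walk.support_cons, List.mem_cons] at hz
    rcases hz with rfl | hz
    · exact hu
    · exact ih hw he.2 hx.2 z hz

lemma exists_split
    (hcross : ∀ a b : V, G.Adj a b → a ∈ S → b ∉ S →
      (a = x1 ∧ b = y1) ∨ (a = x2 ∧ b = y2))
    {u v : V} (p : G.Walk u v) (hp : p.IsPath) (hu : u ∈ S) (hv : v ∉ S)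
    (he : s(x1, y1) ∉ p.edges) :
    ∃ (q : G.Walk u x2) (r : G.Walk y2 v), p.support = q.support ++ r.support ∧
      (∀ w ∈ q.support, w ∈ S) ∧ ∀ w ∈ r.support, w ∉ S := by
  induction p with
  | nil => exact absurd hu hv
  | @cons u w v h p ih =>
    rw [Walk.cons_isPath_iff] at hp
    simp only [Walk.edges_cons, List.mem_cons, not_or] at he
    by_cases hw : w ∈ S
    · obtain ⟨q, r, h1, h2, h3⟩ := ih hp.1 hw hv he.2
      refine ⟨Walk.cons h q, r, by simp [h1], ?_, h3⟩
      simpa using ⟨hu, h2⟩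
    · rcases hcross u w h hu hw with ⟨rfl, rfl⟩ | ⟨rfl, rfl⟩
      · exact absurd rfl he.1
      · exact ⟨Walk.nil, p, by simp, by simpa using hu,
          support_subset_compl hcross p hw he.2 hp.2⟩

lemma HasSpanningPath.symm {a b : V} (h : HasSpanningPath G S a b) : HasSpanningPath G S b a := by
  obtain ⟨p, hp, hps⟩ := h
  exact ⟨p.reverse, hp.reverse, by simpa using hps⟩

/-- A hamiltonian cycle through the cut edge `x1 y1` splits into spanning paths of both sides. -/
lemma spanningPaths_of_mem_edges [DecidableEq V]
    (hcross : ∀ a b : V, G.Adj a b → a ∈ S → b ∉ S →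
      (a = x1 ∧ b = y1) ∨ (a = x2 ∧ b = y2))
    (hx1 : x1 ∈ S) (hy1 : y1 ∉ S) {c : V} (p : G.Walk c c) (hp : p.IsHamiltonianCycle)
    (he : s(x1, y1) ∈ p.edges) :
    HasSpanningPath G S x1 x2 ∧ HasSpanningPath G Sᶜ y1 y2 := by
  obtain ⟨t, ht, hte⟩ := exists_hamiltonian_path_of_mem_edges p hp he
  obtain ⟨q, r, hs, hq, hr⟩ := exists_split hcross t ht.isPath hx1 hy1 hte
  have hnd := ht.isPath.support_nodup
  rw [hs, List.nodup_append] at hnd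
  have hmem : ∀ v, v ∈ q.support ∨ v ∈ r.support := fun v => by
    rw [← List.mem_append, ← hs]
    exact ht.mem_support v
  refine ⟨⟨q, Walk.IsPath.mk' hnd.1, fun v => ⟨hq v, fun hv => ?_⟩⟩,
    HasSpanningPath.symm ⟨r, Walk.IsPath.mk' hnd.2.1, fun v => ⟨hr v, fun hv => ?_⟩⟩⟩
  · exact (hmem v).resolve_right fun h => hr v h hv
  · exact (hmem v).resolve_left fun h => hv (hq v h)

/-- A closed walk through vertices on both sides of a cut uses an edge of the cut. -/
lemma exists_crossing_edge {c a b : V} (p : G.Walk c c) (ha : a ∈ p.support) (hb : b ∈ p.support)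
    (haS : a ∈ S) (hbS : b ∉ S) :
    ∃ u v, u ∈ S ∧ v ∉ S ∧ s(u, v) ∈ p.edges := by
  classical
  by_cases hc : c ∈ S
  · obtain ⟨d, hd, h1, h2⟩ := (p.takeUntil b hb).exists_boundary_dart S hc hbS
    exact ⟨d.fst, d.snd, h1, h2,
      p.edges_takeUntil_subset_edges hb (List.mem_map.2 ⟨d, hd, rfl⟩)⟩
  · obtain ⟨d, hd, h1, h2⟩ := (p.dropUntil a ha).exists_boundary_dart S haS hc
    exact ⟨d.fst, d.snd, h1, h2,
      p.edges_dropUntil_subset_edges ha (List.mem_map.2 ⟨d, hd, rfl⟩)⟩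

end Split

end TwoEdgeCut

open TwoEdgeCut SimpleGraph in
/-- 2-edge-cut decomposition: if exactly two edges `x1y1`, `x2y2` of `G` cross
between `S` and its complement (both sides having at least 3 vertices), then `G`
is hamiltonian iff the graph induced on `S` plus the edge `x1x2` has a
hamiltonian cycle through `x1x2`, and the graph induced on the complement of `S`
plus the edge `y1y2` has a hamiltonian cycle through `y1y2`. -/
theorem two_edge_cut_hamiltonian_decomposition
    {V : Type*} [Fintype V] [DecidableEq V]
    (G : SimpleGraph V) [DecidableRel G.Adj]
    (S : Set V) (hScard : 3 ≤ S.ncard) (hSccard : 3 ≤ Sᶜ.ncard)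
    (x1 x2 y1 y2 : V)
    (hx1 : x1 ∈ S) (hx2 : x2 ∈ S) (hy1 : y1 ∈ Sᶜ) (hy2 : y2 ∈ Sᶜ)
    (hx12 : x1 ≠ x2) (hy12 : y1 ≠ y2)
    (ha1 : G.Adj x1 y1) (ha2 : G.Adj x2 y2)
    (hcross : ∀ a b : V, G.Adj a b → a ∈ S → b ∉ S →
      (a = x1 ∧ b = y1) ∨ (a = x2 ∧ b = y2)) :
    (∃ (c : V) (p : G.Walk c c), p.IsHamiltonianCycle) ↔
    ((∃ (c : ↥S) (p : (G.inducePlusEdge S ⟨x1, hx1⟩ ⟨x2, hx2⟩).Walk c c),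
        p.IsHamiltonianCycle ∧ s((⟨x1, hx1⟩ : ↥S), (⟨x2, hx2⟩ : ↥S)) ∈ p.edges) ∧
     (∃ (c : ↥Sᶜ) (p : (G.inducePlusEdge Sᶜ ⟨y1, hy1⟩ ⟨y2, hy2⟩).Walk c c),
        p.IsHamiltonianCycle ∧ s((⟨y1, hy1⟩ : ↥Sᶜ), (⟨y2, hy2⟩ : ↥Sᶜ)) ∈ p.edges)) := by
  rw [inducePlusEdge_iff G S hScard x1 x2 hx1 hx2 hx12,
    inducePlusEdge_iff G Sᶜ hSccard y1 y2 hy1 hy2 hy12]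
  constructor
  · rintro ⟨c, p, hp⟩
    obtain ⟨u, v, hu, hv, he⟩ :=
      exists_crossing_edge p (hp.mem_support x1) (hp.mem_support y1) hx1 hy1
    rcases hcross u v (p.adj_of_mem_edges he) hu hv with ⟨rfl, rfl⟩ | ⟨rfl, rfl⟩
    · exact spanningPaths_of_mem_edges hcross hu hv p hp he
    · have h := spanningPaths_of_mem_edges (fun a b h1 h2 h3 => (hcross a b h1 h2 h3).symm)
        hu hv p hp he
      exact ⟨h.1.symm, h.2.symm⟩
  · rintro ⟨⟨p, hp, hps⟩, q, hq, hqs⟩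
    have hsupp : (p.append (Walk.cons ha2 q.reverse)).support = p.support ++ q.support.reverse := by
      simp [Walk.support_append]
    have hham : (p.append (Walk.cons ha2 q.reverse)).IsHamiltonian := by
      apply Walk.IsPath.isHamiltonian_of_mem
      · apply Walk.IsPath.mk'
        rw [hsupp, List.nodup_append]
        refine ⟨hp.support_nodup, List.nodup_reverse.2 hq.support_nodup, ?_⟩
        rintro a ha b hb rfl
        exact (hqs a).1 (List.mem_reverse.1 hb) ((hps a).1 ha)
      · intro w
        rw [hsupp, List.mem_append, List.mem_reverse, hps, hqs]
        exact Classical.em _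
    have hcard : 3 ≤ Fintype.card V := by
      rw [← Nat.card_eq_fintype_card]
      exact hScard.trans (Set.ncard_le_card S)
    obtain ⟨c, t, ht, -⟩ := exists_cycle_of_hamiltonian_path _ hham ha1 hcard
    exact ⟨c, t, ht⟩
end

section
/- Let G be a finite 3-regular bipartite simple graph with vertex bipartition (A, B), and let S be a set of vertices of G such that exactly two edges e1 and e2 of G have one endpoint in S and the other endpoint outside S; let x1 and x2 be the endpoints of e1 and e2 in S. Then the graph obtained from the induced subgraph of G on S by adding the edge x1x2 is bipartite; moreover, if x1 and x2 are non-adjacent in G, this graph is 3-regular. -/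
/-- A divisibility-by-three count shows that the ends in `S` of a 2-edge-cut of a cubic bipartite
graph lie in different parts. -/
theorem cut_ends_opposite
    {V : Type*} [Fintype V] [DecidableEq V]
    (G : SimpleGraph V) [DecidableRel G.Adj]
    (A : Set V)
    (hbip : ∀ a b : V, G.Adj a b → (a ∈ A ↔ b ∉ A))
    (hcubic : ∀ v : V, G.degree v = 3)
    (S : Set V) (x1 y1 x2 y2 : V)
    (hx1 : x1 ∈ S) (hy1 : y1 ∉ S) (hx2 : x2 ∈ S) (hy2 : y2 ∉ S)
    (ha1 : G.Adj x1 y1) (ha2 : G.Adj x2 y2)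
    (hne : s(x1, y1) ≠ s(x2, y2))
    (hcross : ∀ a b : V, G.Adj a b → a ∈ S → b ∉ S →
      (a = x1 ∧ b = y1) ∨ (a = x2 ∧ b = y2)) :
    x1 ∈ A ↔ x2 ∉ A := by
  classical
  let σ : V → ℤ := fun v => if v ∈ A then 1 else -1
  let f : V → V → ℤ := fun v w => if G.Adj v w then σ v else 0
  let T : Finset V := Finset.univ.filter (· ∈ S)
  have htot : ∑ v ∈ T, ∑ w, f v w = 3 * ∑ v ∈ T, σ v := by
    rw [Finset.mul_sum]
    refine Finset.sum_congr rfl fun v _ => ?_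
    have h3 : (Finset.univ.filter (G.Adj v)).card = 3 := by
      rw [← hcubic v, ← G.card_neighborFinset_eq_degree, G.neighborFinset_eq_filter]
    simp only [f]
    rw [← Finset.sum_filter, Finset.sum_const, h3]
    simp
  have hanti : ∀ v w, f v w = - f w v := by
    intro v w
    by_cases h : G.Adj v w
    · have h' := hbip v w h
      by_cases hv : v ∈ A <;> by_cases hw : w ∈ A <;> simp_all [f, σ, G.adj_comm w v]
    · simp [f, h, G.adj_comm w v]
  have hin : ∑ v ∈ T, ∑ w ∈ T, f v w = 0 := by
    have h : ∑ v ∈ T, ∑ w ∈ T, f v w = - ∑ v ∈ T, ∑ w ∈ T, f v w := by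
      conv_rhs => rw [Finset.sum_comm]
      simp only [← Finset.sum_neg_distrib, ← hanti]
    omega
  have hout : ∑ v ∈ T, ∑ w ∈ Tᶜ, f v w = σ x1 + σ x2 := by
    have hp : (T ×ˢ Tᶜ).filter (fun p => G.Adj p.1 p.2) = {(x1, y1), (x2, y2)} := by
      ext ⟨a, b⟩
      simp only [T, Finset.mem_filter, Finset.mem_product, Finset.mem_compl, Finset.mem_univ,
        true_and, Finset.mem_insert, Finset.mem_singleton, Prod.mk.injEq]
      constructor
      · rintro ⟨⟨ha, hb⟩, h⟩
        exact hcross a b h ha hb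
      · rintro (⟨rfl, rfl⟩ | ⟨rfl, rfl⟩)
        · exact ⟨⟨hx1, hy1⟩, ha1⟩
        · exact ⟨⟨hx2, hy2⟩, ha2⟩
    have hpne : (x1, y1) ≠ (x2, y2) := by
      intro h
      obtain ⟨h1, h2⟩ := Prod.mk.inj h
      exact hne (by rw [h1, h2])
    rw [← Finset.sum_product']
    simp only [f]
    rw [← Finset.sum_filter, hp, Finset.sum_pair hpne]
  have hkey : 3 * ∑ v ∈ T, σ v = σ x1 + σ x2 := by
    rw [← htot, ← hout, ← zero_add (∑ v ∈ T, ∑ w ∈ Tᶜ, f v w), ← hin, ← Finset.sum_add_distrib]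
    exact Finset.sum_congr rfl fun v _ => (Finset.sum_add_sum_compl T _).symm
  generalize ∑ v ∈ T, σ v = k at hkey
  by_cases h1 : x1 ∈ A <;> by_cases h2 : x2 ∈ A <;> simp only [σ, h1, h2, if_true, if_false] at hkey
  · omega
  · simp [h1, h2]
  · simp [h1, h2]
  · omega

/-- Trading the neighbour `y` for the new neighbour `z` keeps the degree equal to three. -/
theorem ncard_swap_neighbor {V : Type*} {N : Set V} (hN : N.ncard = 3) {y z : V}
    (hy : y ∈ N) (hz : z ∉ N) : (insert z (N \ {y})).ncard = 3 := by
  have hfin : N.Finite := Set.finite_of_ncard_pos (by omega)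
  rw [Set.ncard_insert_of_notMem (fun h => hz h.1) hfin.sdiff,
    Set.ncard_sdiff_singleton_of_mem hy, hN]

/-- In a cubic bipartite graph `G` (with parts `A`, `B`), if exactly two edges
`x1y1`, `x2y2` cross between `S` and its complement, then the graph induced on
`S` plus the edge `x1x2` is bipartite (2-colorable), and if moreover `x1` and
`x2` are non-adjacent in `G`, it is 3-regular. -/
theorem two_edge_cut_piece_is_cubic_bipartite
    {V : Type*} [Fintype V] [DecidableEq V]
    (G : SimpleGraph V) [DecidableRel G.Adj]
    (A B : Set V)
    (hpart : ∀ v : V, v ∈ A ↔ v ∉ B)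
    (hbip : ∀ a b : V, G.Adj a b → (a ∈ A ↔ b ∈ B))
    (hcubic : ∀ v : V, G.degree v = 3)
    (S : Set V) (x1 y1 x2 y2 : V)
    (hx1 : x1 ∈ S) (hy1 : y1 ∉ S) (hx2 : x2 ∈ S) (hy2 : y2 ∉ S)
    (ha1 : G.Adj x1 y1) (ha2 : G.Adj x2 y2)
    (hne : s(x1, y1) ≠ s(x2, y2))
    (hcross : ∀ a b : V, G.Adj a b → a ∈ S → b ∉ S →
      (a = x1 ∧ b = y1) ∨ (a = x2 ∧ b = y2)) :
    (G.inducePlusEdge S ⟨x1, hx1⟩ ⟨x2, hx2⟩).Colorable 2 ∧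
    (¬ G.Adj x1 x2 →
      ∀ a : ↥S, ((G.inducePlusEdge S ⟨x1, hx1⟩ ⟨x2, hx2⟩).neighborSet a).ncard = 3) := by
  classical
  have hbip' : ∀ a b : V, G.Adj a b → (a ∈ A ↔ b ∉ A) := by
    intro a b h
    rw [hbip a b h, hpart b, not_not]
  have hopp : x1 ∈ A ↔ x2 ∉ A := cut_ends_opposite G A hbip' hcubic S x1 y1 x2 y2
    hx1 hy1 hx2 hy2 ha1 ha2 hne hcross
  have hx : x1 ≠ x2 := by
    rintro rfl
    tauto
  have hadj : ∀ a b : ↥S, (G.inducePlusEdge S ⟨x1, hx1⟩ ⟨x2, hx2⟩).Adj a b ↔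
      G.Adj a b ∨ (a.1 = x1 ∧ b.1 = x2) ∨ (a.1 = x2 ∧ b.1 = x1) := by
    rintro ⟨a, ha⟩ ⟨b, hb⟩
    simp only [SimpleGraph.inducePlusEdge, SimpleGraph.sup_adj, SimpleGraph.comap_adj,
      SimpleGraph.fromEdgeSet_adj, Set.mem_singleton_iff, Sym2.eq_iff, Subtype.mk.injEq,
      Function.Embedding.subtype_apply, ne_eq]
    grind
  refine ⟨?_, fun hnadj a => ?_⟩
  · have c : (G.inducePlusEdge S ⟨x1, hx1⟩ ⟨x2, hx2⟩).Coloring Prop :=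
      SimpleGraph.Coloring.mk (fun v => v.1 ∈ A) (by
        intro a b h
        have : a.1 ∈ A ↔ b.1 ∉ A := by
          rcases (hadj a b).1 h with h | ⟨h1, h2⟩ | ⟨h1, h2⟩
          · exact hbip' _ _ h
          · rw [h1, h2]; exact hopp
          · rw [h1, h2]; tauto
        intro heq
        rw [heq] at this
        tauto)
    simpa using c.colorable
  · have hdeg : ∀ v, (G.neighborSet v).ncard = 3 := by
      intro v
      rw [← hcubic v, ← G.card_neighborSet_eq_degree, Set.ncard_eq_toFinset_card',
        Set.toFinset_card]
    rw [← Set.ncard_image_of_injective _ Subtype.val_injective]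
    have himg : ∀ w, w ∈ Subtype.val ''
        ((G.inducePlusEdge S ⟨x1, hx1⟩ ⟨x2, hx2⟩).neighborSet a) ↔
        w ∈ S ∧ (G.Adj a w ∨ (a.1 = x1 ∧ w = x2) ∨ (a.1 = x2 ∧ w = x1)) := by
      intro w
      simp [hadj, and_comm]
    obtain ⟨a, ha⟩ := a
    by_cases h1 : a = x1
    · subst h1
      rw [← ncard_swap_neighbor (hdeg a) (y := y1) (z := x2) ha1 hnadj]
      congr 1
      ext w
      rw [himg]
      simp only [Set.mem_insert_iff, Set.mem_sdiff, SimpleGraph.mem_neighborSet,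
        Set.mem_singleton_iff]
      have := hcross a w
      grind
    · by_cases h2 : a = x2
      · subst h2
        rw [← ncard_swap_neighbor (hdeg a) (y := y2) (z := x1) ha2 (fun h => hnadj h.symm)]
        congr 1
        ext w
        rw [himg]
        simp only [Set.mem_insert_iff, Set.mem_sdiff, SimpleGraph.mem_neighborSet,
          Set.mem_singleton_iff]
        have := hcross a w
        grind
      · rw [← hdeg a]
        congr 1
        ext w
        rw [himg]
        simp only [SimpleGraph.mem_neighborSet]
        have := hcross a w
        grind
end

section
/- Let G be a finite 3-regular (cubic) simple graph containing four distinct vertices w, x, y, z with wx, xy, yz, zw all edges of G (a 4-cycle). Let w1, x1, y1, z1 be the third neighbors of w, x, y, z respectively (i.e. the unique neighbor of each outside the 4-cycle), and assume w1, x1, y1, z1 all lie outside {w, x, y, z}, with w1 ≠ x1 and y1 ≠ z1. Let G' be the graph on the vertex set V(G) \ {w, x, y, z} whose edges are those of the induced subgraph of G on this set together with the two edges w1x1 and y1z1. If G' has a hamiltonian cycle containing the edge w1x1, or a hamiltonian cycle containing the edge y1z1, then G has a hamiltonian cycle. -/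
/-!
Replacing an edge of a hamiltonian cycle by a longer route is done on paths. Removing `w1x1` from
the given cycle leaves a hamiltonian path `q` of `G'` from `x1` to `w1`
(`exists_path_of_mem_edges`). All edges of `q` lie in `G`, except possibly `y1z1`.

* If `y1z1` is not on `q`, then `q` is a path of `G` (`exists_lift`), and closing it up by
  `w1 w z y x x1` gives the cycle.
* If `y1z1` is on `q`, it occurs exactly once and is replaced by `y1 y z z1` (`exists_detour`);
  the result is closed up by `w1 w x x1`.

A cycle through `y1z1` is handled by the symmetry `(w, x, y, z) ↦ (y, z, w, x)`.
-/

/-- The induced subgraph of `G` on `S` together with two extra edges `a b` and `c d`. -/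
def SimpleGraph.inducePlusTwoEdges {V : Type*} (G : SimpleGraph V) (S : Set V)
    (a b c d : ↥S) : SimpleGraph ↥S :=
  G.induce S ⊔ SimpleGraph.fromEdgeSet {s(a, b), s(c, d)}

namespace QuadContraction

open SimpleGraph

/-- Removing an edge `ab` from a hamiltonian cycle leaves a hamiltonian path from `b` to `a`. -/
lemma exists_path_of_mem_edges {U : Type*} [DecidableEq U] {H : SimpleGraph U} {c a b : U}
    (p : H.Walk c c) (hp : p.IsHamiltonianCycle) (he : s(a, b) ∈ p.edges) :
    ∃ q : H.Walk b a, q.IsHamiltonian ∧ s(a, b) ∉ q.edges := by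
  have ha := p.fst_mem_support_of_mem_edges he
  have hr := hp.rotate ha
  have her : s(a, b) ∈ (p.rotate a ha).edges := (p.rotate_edges a ha).mem_iff.2 he
  generalize p.rotate a ha = r at hr her
  cases r with
  | nil => exact absurd rfl hr.ne_nil
  | @cons _ v _ h q =>
    obtain ⟨hq, hnot⟩ := (Walk.cons_isCycle_iff q h).1 hr.isCycle
    have hH : q.IsHamiltonian := by simpa [Walk.IsHamiltonian] using hr.isHamiltonian_tail
    by_cases hvb : b = v
    · subst hvb
      exact ⟨q, hH, hnot⟩
    · have hbq : s(a, b) ∈ q.edges := by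
        rw [Walk.edges_cons, List.mem_cons] at her
        rcases her with h' | h'
        · exact absurd (Sym2.congr_right.1 h') hvb
        · exact h'
      -- `ab` is then the last edge of the cycle, hence the first one of the reversed cycle.
      have hrev : q.reverse.IsHamiltonian := by
        intro t
        simpa using hH t
      have hbr : s(a, b) ∈ q.reverse.edges := by simpa using hbq
      have hsnd := hrev.isPath.eq_snd_of_mem_edges hbr
      generalize q.reverse = q' at hrev hbr hsnd
      cases q' with
      | nil => simp at hbr
      | @cons _ v' _ h' tl =>
        have hbv : b = v' := by simpa using hsnd
        subst hbv
        have hpath := hrev.isPath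
        rw [Walk.cons_isPath_iff] at hpath
        refine ⟨tl.concat h.symm, ?_, ?_⟩
        · intro t
          have := hrev t
          simp only [Walk.support_cons, Walk.support_concat,
            List.count_append, List.count_cons, List.count_nil] at this ⊢
          omega
        · rw [Walk.edges_concat, List.concat_eq_append, List.mem_append, List.mem_singleton]
          rintro (h1 | h1)
          · exact hpath.2 (tl.fst_mem_support_of_mem_edges h1)
          · rw [Sym2.eq_swap, Sym2.congr_left] at h1
            exact hvb h1

lemma exists_hamiltonianCycle_of_path {V : Type*} [DecidableEq V] {G : SimpleGraph V} {a b : V}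
    (p : G.Walk a b) (hp : p.IsHamiltonian) (hl : p.length ≠ 1) (h : G.Adj b a) :
    ∃ (c : V) (p : G.Walk c c), p.IsHamiltonianCycle := by
  refine ⟨b, Walk.cons h p, (Walk.cons_isCycle_iff p h).2 ⟨hp.isPath, fun hm => ?_⟩, ?_⟩
  · exact hl (hp.isPath.length_eq_one_of_mem_edges (Sym2.eq_swap ▸ hm))
  · simpa [Walk.IsHamiltonian] using hp

lemma exists_lift {V : Type*} {G : SimpleGraph V} {S : Set V} {H : SimpleGraph S} {a b : S}
    (q : H.Walk a b) (h : ∀ u v : S, s(u, v) ∈ q.edges → G.Adj u v) :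
    ∃ r : G.Walk (a : V) b, r.support = q.support.map Subtype.val := by
  induction q with
  | nil => exact ⟨Walk.nil, by simp⟩
  | cons hadj q ih =>
    obtain ⟨r, hr⟩ := ih fun u v huv => h u v (by simp [huv])
    exact ⟨Walk.cons (h _ _ (by simp)) r, by simp [hr]⟩

/-- A trail through the edge `cd` all of whose other edges lie in `G` becomes a walk of `G` when
`cd` is replaced by the detour `c y z d`. -/
lemma exists_detour {V : Type*} {G : SimpleGraph V} {S : Set V} {H : SimpleGraph S} {a b : S}
    {c d : S} {y z : V} (hyc : G.Adj y c) (hyz : G.Adj y z) (hzd : G.Adj z d)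
    (q : H.Walk a b) (hq : q.IsTrail)
    (h : ∀ u v : S, s(u, v) ∈ q.edges → G.Adj u v ∨ s(u, v) = s(c, d))
    (he : s(c, d) ∈ q.edges) :
    ∃ r : G.Walk (a : V) b, r.support.Perm (y :: z :: q.support.map Subtype.val) := by
  classical
  induction q with
  | nil => simp at he
  | @cons a a' b hadj q ih =>
    rw [Walk.isTrail_cons] at hq
    by_cases hcd : s(a, a') = s(c, d)
    · obtain ⟨r, hr⟩ := exists_lift (G := G) q fun u v huv =>
        (h u v (by simp [huv])).resolve_right fun h' => hq.2 (by rw [hcd, ← h']; exact huv)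
      rcases Sym2.eq_iff.1 hcd with ⟨rfl, rfl⟩ | ⟨rfl, rfl⟩
      · refine ⟨Walk.cons hyc.symm (Walk.cons hyz (Walk.cons hzd r)), ?_⟩
        simp only [Walk.support_cons, hr, List.map_cons, List.perm_iff_count, List.count_cons]
        intro t
        omega
      · refine ⟨Walk.cons hzd.symm (Walk.cons hyz.symm (Walk.cons hyc r)), ?_⟩
        simp only [Walk.support_cons, hr, List.map_cons, List.perm_iff_count, List.count_cons]
        intro t
        omega
    · obtain ⟨r, hr⟩ := ih hq.1 (fun u v huv => h u v (by simp [huv]))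
        (by simpa [Ne.symm hcd] using he)
      refine ⟨Walk.cons ((h a a' (by simp)).resolve_right hcd) r, ?_⟩
      rw [List.perm_iff_count] at hr ⊢
      intro t
      have := hr t
      simp only [Walk.support_cons, List.map_cons, List.count_cons] at this ⊢
      omega

/-- The case of a hamiltonian cycle through `w1x1`, for an abstract graph `H` on the complement
of the quadrilateral whose edges other than `w1x1` and `y1z1` come from `G`. -/
lemma hamiltonian_of_mem_edges {V : Type*} [DecidableEq V] {G : SimpleGraph V} {S : Set V}
    {H : SimpleGraph S} {w x y z : V} {w1 x1 y1 z1 c : S}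
    (hS : ∀ v, v ∈ S ↔ v ≠ w ∧ v ≠ x ∧ v ≠ y ∧ v ≠ z)
    (hwx : w ≠ x) (hwy : w ≠ y) (hwz : w ≠ z) (hxy : x ≠ y) (hxz : x ≠ z) (hyz : y ≠ z)
    (hawx : G.Adj w x) (haxy : G.Adj x y) (hayz : G.Adj y z) (hazw : G.Adj z w)
    (haw1 : G.Adj w w1) (hax1 : G.Adj x x1) (hay1 : G.Adj y y1) (haz1 : G.Adj z z1)
    (hH : ∀ u v : S, H.Adj u v → G.Adj u v ∨ s(u, v) = s(w1, x1) ∨ s(u, v) = s(y1, z1))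
    (p : H.Walk c c) (hp : p.IsHamiltonianCycle) (he : s(w1, x1) ∈ p.edges) :
    ∃ (c : V) (p : G.Walk c c), p.IsHamiltonianCycle := by
  obtain ⟨q, hq, hnot⟩ := exists_path_of_mem_edges p hp he
  have hedge : ∀ u v : S, s(u, v) ∈ q.edges → G.Adj u v ∨ s(u, v) = s(y1, z1) := by
    intro u v huv
    rcases hH u v (q.adj_of_mem_edges huv) with h | h | h
    · exact Or.inl h
    · exact absurd (h ▸ huv) hnot
    · exact Or.inr h
  have hcount : ∀ v, (q.support.map Subtype.val).count v =
      if v ≠ w ∧ v ≠ x ∧ v ≠ y ∧ v ≠ z then 1 else 0 := by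
    intro v
    split_ifs with hv <;> rw [← hS] at hv
    · have := List.count_map_of_injective q.support _ Subtype.val_injective ⟨v, hv⟩
      rw [this]
      -- The two sides use different `BEq` instances on `S`.
      convert hq ⟨v, hv⟩
    · exact List.count_eq_zero.2 (by simp [hv])
  by_cases hyzq : s(y1, z1) ∈ q.edges
  · obtain ⟨r, hr⟩ := exists_detour hay1 hayz haz1 q hq.isPath.isTrail hedge hyzq
    refine exists_hamiltonianCycle_of_path (Walk.cons hax1 (r.concat haw1.symm)) ?_ ?_ hawx
    · intro v
      have h1 := hr.count_eq v
      simp only [List.count_cons, hcount] at h1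
      simp only [Walk.support_cons, Walk.support_concat,
        List.count_append, List.count_cons, List.count_nil, h1]
      grind
    · simp
  · obtain ⟨r, hr⟩ := exists_lift (G := G) q fun u v huv =>
      (hedge u v huv).resolve_right fun h => hyzq (h ▸ huv)
    refine exists_hamiltonianCycle_of_path
      (Walk.cons hax1 (((r.concat haw1.symm).concat hazw.symm).concat hayz.symm)) ?_ ?_ haxy.symm
    · intro v
      have h1 := congrArg (List.count v) hr
      simp only [hcount] at h1
      simp only [Walk.support_cons, Walk.support_concat,
        List.count_append, List.count_cons, List.count_nil, h1]
      grind
    · simp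

end QuadContraction

/-- Contraction of a facial quadrilateral: let `wxyzw` be a 4-cycle in a cubic
graph `G`, with third neighbours `w1, x1, y1, z1` lying outside the 4-cycle, and
let `G'` be obtained from `G` by deleting `w, x, y, z` and adding the edges
`w1x1` and `y1z1`. If `G'` has a hamiltonian cycle through `w1x1` or a
hamiltonian cycle through `y1z1`, then `G` is hamiltonian. -/
theorem quadrilateral_contraction_hamiltonian
    {V : Type*} [Fintype V] [DecidableEq V]
    (G : SimpleGraph V) [DecidableRel G.Adj]
    (hcubic : ∀ v : V, G.degree v = 3)
    (w x y z w1 x1 y1 z1 : V)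
    (hwx : w ≠ x) (hwy : w ≠ y) (hwz : w ≠ z)
    (hxy : x ≠ y) (hxz : x ≠ z) (hyz : y ≠ z)
    (hawx : G.Adj w x) (haxy : G.Adj x y) (hayz : G.Adj y z) (hazw : G.Adj z w)
    (haw1 : G.Adj w w1) (hax1 : G.Adj x x1) (hay1 : G.Adj y y1) (haz1 : G.Adj z z1)
    (hw1 : w1 ∈ ({w, x, y, z} : Set V)ᶜ) (hx1 : x1 ∈ ({w, x, y, z} : Set V)ᶜ)
    (hy1 : y1 ∈ ({w, x, y, z} : Set V)ᶜ) (hz1 : z1 ∈ ({w, x, y, z} : Set V)ᶜ)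
    (hw1x1 : w1 ≠ x1) (hy1z1 : y1 ≠ z1) :
    (∃ (c : ↥(({w, x, y, z} : Set V)ᶜ))
       (p : (G.inducePlusTwoEdges ({w, x, y, z} : Set V)ᶜ
              ⟨w1, hw1⟩ ⟨x1, hx1⟩ ⟨y1, hy1⟩ ⟨z1, hz1⟩).Walk c c),
        p.IsHamiltonianCycle ∧
        (s((⟨w1, hw1⟩ : ↥(({w, x, y, z} : Set V)ᶜ)), (⟨x1, hx1⟩ : ↥(({w, x, y, z} : Set V)ᶜ))) ∈ p.edges ∨
         s((⟨y1, hy1⟩ : ↥(({w, x, y, z} : Set V)ᶜ)), (⟨z1, hz1⟩ : ↥(({w, x, y, z} : Set V)ᶜ))) ∈ p.edges)) →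
    ∃ (c : V) (p : G.Walk c c), p.IsHamiltonianCycle := by
  rintro ⟨c, p, hp, he⟩
  have hH : ∀ u v, (G.inducePlusTwoEdges ({w, x, y, z} : Set V)ᶜ
      ⟨w1, hw1⟩ ⟨x1, hx1⟩ ⟨y1, hy1⟩ ⟨z1, hz1⟩).Adj u v →
      G.Adj u v ∨ s(u, v) = s(⟨w1, hw1⟩, ⟨x1, hx1⟩) ∨ s(u, v) = s(⟨y1, hy1⟩, ⟨z1, hz1⟩) := by
    intro u v huv
    rw [SimpleGraph.inducePlusTwoEdges, SimpleGraph.sup_adj, SimpleGraph.fromEdgeSet_adj] at huv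
    rcases huv with h | ⟨h, -⟩
    · exact Or.inl h
    · exact Or.inr h
  rcases he with he | he
  · exact QuadContraction.hamiltonian_of_mem_edges (by simp) hwx hwy hwz hxy hxz hyz
      hawx haxy hayz hazw haw1 hax1 hay1 haz1 hH p hp he
  · exact QuadContraction.hamiltonian_of_mem_edges (by grind) hyz hwy.symm hxy.symm hwz.symm
      hxz.symm hwx hayz hazw hawx haxy hay1 haz1 haw1 hax1
      (fun u v huv => (hH u v huv).imp_right Or.symm) p hp he
end
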